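/- Let ε ∈ (0,1) and δ ∈ (0, log(1 + 2ε/(1−ε))), and let k be an even positive integer with k ≥ 3·((1/δ)·log(1 + 2ε/(1−ε)))². Let f : ℝ → ℝ be any measurable function satisfying (1−ε)·φ(x−δ) ≤ f(x) ≤ φ(x−δ) for all x ∈ ℝ, and let P' denote the probability distribution on ℝ with density f(x)/∫_ℝ f. Then there exists an integer t with 1 ≤ t ≤ k such that |E_{x∼P'}[h_t(x)]| > ε/(k+1)^{k/2}. -/

import Mathlib

open MeasureTheory

/-- The probability density function of the standard Gaussian `N(0,1)`. -/
noncomputable def gaussPDF (x : ℝ) : ℝ := Real.exp (-x ^ 2 / 2) / Real.sqrt (2 * Real.pi)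

/-- The normalized probabilist's Hermite polynomial `h_t(x) = He_t(x)/√(t!)`. -/
noncomputable def hermiteNorm (t : ℕ) (x : ℝ) : ℝ :=
  (Polynomial.aeval x (Polynomial.hermite t)) / Real.sqrt (Nat.factorial t)

/-!
Write `k = 2n + 2` and `R = log((1 + ε) / (1 - ε)) / δ`, so that `3R² ≤ 2n + 2`. The odd power
`x ^ (2n+1) / (2n+1)‼` is the sum of the `He_{2r+1} / (2r+1)‼`, `r ≤ n`, with binomial
coefficients, so if all odd Hermite moments of `f` up to degree `2n + 1` are at most `η`, then the
moment `∫ x ^ (2n+1) * f x` is at most `(2n+1)‼ * 2 ^ n * η`.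

On the other hand, that moment is smallest when the corruption removes the fraction `ε` on the
positive half-line and nothing on the negative one. Since the density of `N(δ, 1)` is
`exp (-δ² / 2) * exp (δ * x)` times the standard one, Jensen's inequality bounds the positive part
below in terms of the value of `exp (δ * x)` at a lower bound `c` for the ratio of consecutive
half-line moments, where any `c` with `c² ≤ 2n + 1` is allowed. The choice `c = 3R / 2` contradicts
the upper bound as long as `δ ≤ 2.1 R`. For larger `δ` the mean is already large: the first moment
stays positive after translating `f` to the left by `1/20`, so the mean of `f / ∫ f` exceeds `1/20`.
-/

lemma hermiteNorm_one (x : ℝ) : hermiteNorm 1 x = x := by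
  simp [hermiteNorm]

open Polynomial in
lemma derivative_hermite_succ (n : ℕ) :
    derivative (hermite (n + 1)) = (n + 1 : ℤ[X]) * hermite n := by
  induction n with
  | zero => simp
  | succ n ih =>
    rw [hermite_succ (n + 1), derivative_sub, derivative_mul, derivative_X, ih, derivative_mul,
      hermite_succ n]
    simp only [derivative_add, derivative_natCast, derivative_one]
    push_cast
    ring

open Polynomial in
lemma mul_aeval_hermite_succ (n : ℕ) (x : ℝ) :
    x * aeval x (hermite (n + 1)) =
      aeval x (hermite (n + 2)) + (n + 1) * aeval x (hermite n) := by
  rw [hermite_succ (n + 1), derivative_hermite_succ]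
  simp

section BinomialSums

open Finset

variable {R : Type*} [CommRing R]

lemma sum_range_choose_mul_add_succ (a : ℕ → R) (n : ℕ) :
    ∑ r ∈ range (n + 1), (n.choose r : R) * (a r + a (r + 1)) =
      ∑ r ∈ range (n + 2), ((n + 1).choose r : R) * a r := by
  simp only [mul_add, sum_add_distrib]
  exact (sum_choose_succ_mul (fun r _ ↦ a r) n).symm

lemma sum_range_choose_mul_mul_pred (a : ℕ → R) (n : ℕ) :
    ∑ r ∈ range (n + 1), (n.choose r : R) * (r * a (r - 1)) =
      ∑ r ∈ range (n + 1), (n.choose r : R) * ((n - r) * a r) := by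
  rw [sum_range_succ', sum_range_succ (fun r ↦ (n.choose r : R) * ((n - r) * a r))]
  simp only [Nat.cast_zero, zero_mul, mul_zero, sub_self, Nat.add_sub_cancel]
  congr 1
  refine sum_congr rfl fun r hr ↦ ?_
  have hchoose : (n.choose (r + 1) : R) * (r + 1 : ℕ) = n.choose r * (n - r) := by
    rw [← Nat.cast_sub (mem_range.1 hr).le, ← Nat.cast_mul, Nat.choose_succ_right_eq,
      Nat.cast_mul]
  rw [← mul_assoc, hchoose, mul_assoc]

end BinomialSums

section OddPowers

open Finset Polynomial
open scoped Nat

lemma cast_doubleFactorial_odd_succ (r : ℕ) :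
    ((2 * (r + 1) + 1)‼ : ℝ) = (2 * r + 3) * (2 * r + 1)‼ := by
  rw [show 2 * (r + 1) + 1 = 2 * r + 1 + 2 by ring, Nat.doubleFactorial_add_two]
  push_cast
  ring

lemma cast_doubleFactorial_ne_zero (n : ℕ) : (n‼ : ℝ) ≠ 0 :=
  mod_cast n.doubleFactorial_pos.ne'

/-- The odd-degree Hermite polynomials divided by the double factorial of their degree, a
normalization in which the expansion of odd powers has binomial coefficients. -/
noncomputable def scaledHermiteOdd (r : ℕ) (x : ℝ) : ℝ :=
  aeval x (hermite (2 * r + 1)) / (2 * r + 1)‼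

/-- The even-degree companions `He_{2r} / (2r-1)‼` of `scaledHermiteOdd`. The factor
`1 / (2r-1)‼` is written `(2r+1) / (2r+1)‼` to avoid truncated subtraction at `r = 0`. -/
noncomputable def scaledHermiteEven (r : ℕ) (x : ℝ) : ℝ :=
  (2 * r + 1) * aeval x (hermite (2 * r)) / (2 * r + 1)‼

lemma mul_scaledHermiteOdd (r : ℕ) (x : ℝ) :
    x * scaledHermiteOdd r x = scaledHermiteEven r x + scaledHermiteEven (r + 1) x := by
  have hrec := mul_aeval_hermite_succ (2 * r) x
  have := cast_doubleFactorial_ne_zero (2 * r + 1)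
  unfold scaledHermiteOdd scaledHermiteEven
  rw [cast_doubleFactorial_odd_succ, show 2 * (r + 1) = 2 * r + 2 by ring]
  push_cast at hrec ⊢
  field_simp
  linear_combination (2 * r + 3) * hrec

lemma mul_scaledHermiteEven (r : ℕ) (x : ℝ) :
    x * scaledHermiteEven r x =
      (2 * r + 1) * scaledHermiteOdd r x + 2 * (r * scaledHermiteOdd (r - 1) x) := by
  unfold scaledHermiteOdd scaledHermiteEven
  cases r with
  | zero => simp
  | succ r =>
    have hrec := mul_aeval_hermite_succ (2 * r + 1) x
    have := cast_doubleFactorial_ne_zero (2 * r + 1)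
    rw [cast_doubleFactorial_odd_succ, Nat.add_sub_cancel,
      show 2 * (r + 1) = 2 * r + 1 + 1 by ring]
    push_cast at hrec ⊢
    field_simp
    linear_combination (2 * r + 3) * hrec

lemma sum_choose_mul_scaledHermiteOdd (n : ℕ) (x : ℝ) :
    ∑ r ∈ range (n + 1), (n.choose r : ℝ) * scaledHermiteOdd r x =
      x ^ (2 * n + 1) / (2 * n + 1)‼ := by
  set q : ℕ → ℝ := fun r ↦ scaledHermiteOdd r x
  set a : ℕ → ℝ := fun r ↦ scaledHermiteEven r x
  change ∑ r ∈ range (n + 1), (n.choose r : ℝ) * q r = _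
  induction n with
  | zero => simp [q, scaledHermiteOdd]
  | succ n ih =>
    have hstep : x * (x * (x ^ (2 * n + 1) / (2 * n + 1)‼)) =
        (2 * n + 3) * ∑ r ∈ range (n + 2), ((n + 1).choose r : ℝ) * q r :=
      calc x * (x * (x ^ (2 * n + 1) / (2 * n + 1)‼))
          = x * ∑ r ∈ range (n + 1), (n.choose r : ℝ) * (a r + a (r + 1)) := by
            simp only [← ih, mul_sum, a, q, ← mul_scaledHermiteOdd, mul_left_comm]
        _ = ∑ r ∈ range (n + 2), ((n + 1).choose r : ℝ) * ((2 * r + 1) * q r) +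
              2 * ∑ r ∈ range (n + 2), ((n + 1).choose r : ℝ) * (r * q (r - 1)) := by
            rw [sum_range_choose_mul_add_succ, mul_sum, mul_sum, ← sum_add_distrib]
            refine sum_congr rfl fun r _ ↦ ?_
            linear_combination ((n + 1).choose r : ℝ) * mul_scaledHermiteEven r x
        _ = (2 * n + 3) * ∑ r ∈ range (n + 2), ((n + 1).choose r : ℝ) * q r := by
            rw [sum_range_choose_mul_mul_pred, mul_sum, mul_sum, ← sum_add_distrib]
            refine sum_congr rfl fun r _ ↦ ?_
            push_cast
            ring
    have := cast_doubleFactorial_ne_zero (2 * n + 1)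
    rw [cast_doubleFactorial_odd_succ, eq_div_iff (by positivity)]
    field_simp at hstep
    linear_combination -hstep

lemma doubleFactorial_le_succ : ∀ n : ℕ, n‼ ≤ (n + 1)‼
  | 0 | 1 => by decide
  | n + 2 => by
    rw [Nat.doubleFactorial_add_two n, Nat.doubleFactorial_add_two (n + 1)]
    exact Nat.mul_le_mul (by lia) (doubleFactorial_le_succ n)

lemma sqrt_factorial_le_doubleFactorial (n : ℕ) : √(n ! : ℝ) ≤ n‼ := by
  rw [Real.sqrt_le_left (by positivity)]
  cases n with
  | zero => simp
  | succ n =>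
    rw [Nat.factorial_eq_mul_doubleFactorial, sq]
    exact_mod_cast Nat.mul_le_mul_left _ (doubleFactorial_le_succ n)

lemma abs_integral_odd_pow_mul_le {f : ℝ → ℝ} {n : ℕ} {η : ℝ}
    (hint : ∀ r ≤ n, Integrable fun x ↦ hermiteNorm (2 * r + 1) x * f x)
    (hη : ∀ r ≤ n, |∫ x, hermiteNorm (2 * r + 1) x * f x| ≤ η) :
    |∫ x, x ^ (2 * n + 1) * f x| ≤ (2 * n + 1)‼ * 2 ^ n * η := by
  set c : ℕ → ℝ := fun r ↦ √((2 * r + 1)! : ℝ) / (2 * r + 1)‼ with hc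
  have hc0 (r : ℕ) : 0 ≤ c r := by positivity
  have hc1 (r : ℕ) : c r ≤ 1 :=
    div_le_one_of_le₀ (sqrt_factorial_le_doubleFactorial _) (Nat.cast_nonneg _)
  have hexpand (x : ℝ) : x ^ (2 * n + 1) * f x = (2 * n + 1)‼ *
      ∑ r ∈ range (n + 1), (n.choose r * c r) * (hermiteNorm (2 * r + 1) x * f x) := by
    rw [← mul_div_cancel₀ (x ^ (2 * n + 1)) (cast_doubleFactorial_ne_zero (2 * n + 1)),
      ← sum_choose_mul_scaledHermiteOdd, mul_assoc, sum_mul]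
    congr 1
    refine sum_congr rfl fun r _ ↦ ?_
    have : √((2 * r + 1)! : ℝ) ≠ 0 := by positivity
    simp only [hc, hermiteNorm, scaledHermiteOdd]
    field_simp
  have hsum : ∫ x, x ^ (2 * n + 1) * f x = (2 * n + 1)‼ *
      ∑ r ∈ range (n + 1), (n.choose r * c r) * ∫ x, hermiteNorm (2 * r + 1) x * f x := by
    simp only [hexpand, integral_const_mul]
    rw [integral_finsetSum _ fun r hr ↦ (hint r (mem_range_succ_iff.1 hr)).const_mul _]
    simp only [integral_const_mul]
  rw [hsum, abs_mul, Nat.abs_cast, mul_assoc]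
  gcongr
  calc |∑ r ∈ range (n + 1), (n.choose r * c r) * ∫ x, hermiteNorm (2 * r + 1) x * f x|
      ≤ ∑ r ∈ range (n + 1), (n.choose r : ℝ) * η := by
        refine (abs_sum_le_sum_abs _ _).trans (sum_le_sum fun r hr ↦ ?_)
        rw [abs_mul, abs_of_nonneg (mul_nonneg (Nat.cast_nonneg _) (hc0 r))]
        gcongr
        · exact mul_le_of_le_one_right (Nat.cast_nonneg _) (hc1 r)
        · exact hη r (mem_range_succ_iff.1 hr)
    _ = 2 ^ n * η := by
        rw [← sum_mul]
        exact_mod_cast congrArg (fun m : ℕ ↦ (m : ℝ) * η) (Nat.sum_range_choose n)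

end OddPowers

section Gaussian

open Set

lemma gaussPDF_pos (x : ℝ) : 0 < gaussPDF x := by
  unfold gaussPDF
  positivity

lemma gaussPDF_sub_eq_gaussianPDFReal (μ x : ℝ) :
    gaussPDF (x - μ) = ProbabilityTheory.gaussianPDFReal μ 1 x := by
  simp [gaussPDF, ProbabilityTheory.gaussianPDFReal, div_eq_inv_mul]

lemma gaussPDF_sub (μ x : ℝ) :
    gaussPDF (x - μ) = Real.exp (-μ ^ 2 / 2) * (Real.exp (μ * x) * gaussPDF x) := by
  simp only [gaussPDF, ← mul_div_assoc, ← Real.exp_add]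
  ring_nf

lemma integrable_pow_mul_gaussPDF (n : ℕ) : Integrable fun x ↦ x ^ n * gaussPDF x := by
  have h := (integrable_rpow_mul_exp_neg_mul_sq (b := 1 / 2) (by norm_num) (s := n)
    (neg_one_lt_zero.trans_le n.cast_nonneg)).div_const √(2 * Real.pi)
  refine h.congr (.of_forall fun x ↦ ?_)
  simp only [gaussPDF, Real.rpow_natCast, mul_div_assoc]
  ring_nf

open Polynomial in
lemma integrable_eval_mul_gaussPDF_sub (P : ℝ[X]) (μ : ℝ) :
    Integrable fun x ↦ P.eval x * gaussPDF (x - μ) := by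
  have hcentred (Q : ℝ[X]) : Integrable fun x ↦ Q.eval x * gaussPDF x := by
    induction Q using Polynomial.induction_on' with
    | add p q hp hq =>
      simp only [eval_add, add_mul]
      exact hp.add hq
    | monomial n a =>
      simpa only [eval_monomial, mul_assoc] using (integrable_pow_mul_gaussPDF n).const_mul a
  have h := (hcentred (P.comp (X + C μ))).comp_sub_right μ
  simp only [eval_comp, eval_add, eval_X, eval_C, sub_add_cancel] at h
  exact h

lemma integrable_pow_mul_gaussPDF_sub (n : ℕ) (μ : ℝ) :
    Integrable fun x ↦ x ^ n * gaussPDF (x - μ) := by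
  simpa using integrable_eval_mul_gaussPDF_sub (.X ^ n) μ

lemma integrable_gaussPDF_sub (μ : ℝ) : Integrable fun x ↦ gaussPDF (x - μ) := by
  simpa using integrable_pow_mul_gaussPDF_sub 0 μ

lemma integral_gaussPDF_sub (μ : ℝ) : ∫ x, gaussPDF (x - μ) = 1 := by
  simp only [gaussPDF_sub_eq_gaussianPDFReal]
  exact ProbabilityTheory.integral_gaussianPDFReal_eq_one μ one_ne_zero

lemma integral_mul_gaussPDF_sub (μ : ℝ) : ∫ x, x * gaussPDF (x - μ) = μ := by
  have h := ProbabilityTheory.integral_id_gaussianReal (μ := μ) (v := 1)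
  rw [ProbabilityTheory.integral_gaussianReal_eq_integral_smul one_ne_zero] at h
  simpa only [gaussPDF_sub_eq_gaussianPDFReal, smul_eq_mul, mul_comm] using h

lemma le_setIntegral_Ioi_mul_gaussPDF_sub (μ : ℝ) :
    μ ≤ ∫ x in Ioi 0, x * gaussPDF (x - μ) := by
  have hint : Integrable fun x ↦ x * gaussPDF (x - μ) := by
    simpa using integrable_pow_mul_gaussPDF_sub 1 μ
  have hneg : ∫ x in Iic 0, x * gaussPDF (x - μ) ≤ 0 :=
    setIntegral_nonpos measurableSet_Iic fun x hx ↦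
      mul_nonpos_of_nonpos_of_nonneg hx (gaussPDF_pos _).le
  have hsplit := intervalIntegral.integral_Iic_add_Ioi (b := 0) hint.integrableOn hint.integrableOn
  rw [integral_mul_gaussPDF_sub] at hsplit
  linarith

/-- The half-line moment `E[Z ^ n; Z > 0]` of a standard Gaussian `Z`. -/
noncomputable def gaussHalfMoment (n : ℕ) : ℝ := ∫ x in Ioi 0, x ^ n * gaussPDF x

lemma gaussHalfMoment_nonneg (n : ℕ) : 0 ≤ gaussHalfMoment n :=
  setIntegral_nonneg measurableSet_Ioi fun x hx ↦
    mul_nonneg (pow_nonneg (le_of_lt hx) n) (gaussPDF_pos x).le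

lemma gaussHalfMoment_eq_Gamma (n : ℕ) :
    gaussHalfMoment n = (1 / 2 : ℝ) ^ (-((n : ℝ) + 1) / 2) * (1 / 2) *
      Real.Gamma (((n : ℝ) + 1) / 2) / √(2 * Real.pi) := by
  rw [← integral_rpow_mul_exp_neg_mul_rpow two_pos (neg_one_lt_zero.trans_le n.cast_nonneg)
    (by norm_num), ← integral_div]
  refine integral_congr_ae (.of_forall fun x ↦ ?_)
  simp only [gaussPDF, Real.rpow_natCast, Real.rpow_two, mul_div_assoc]
  ring_nf

lemma gaussHalfMoment_add_two (n : ℕ) :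
    gaussHalfMoment (n + 2) = (n + 1) * gaussHalfMoment n := by
  simp only [gaussHalfMoment_eq_Gamma]
  push_cast
  rw [show ((n : ℝ) + 2 + 1) / 2 = (n + 1) / 2 + 1 by ring, Real.Gamma_add_one (by positivity),
    show -((n : ℝ) + 2 + 1) / 2 = -(n + 1) / 2 - 1 by ring, Real.rpow_sub_one (by norm_num)]
  ring

open scoped Nat in
lemma gaussHalfMoment_odd (n : ℕ) :
    gaussHalfMoment (2 * n + 1) = 2 ^ n * n ! / √(2 * Real.pi) := by
  induction n with
  | zero => norm_num [gaussHalfMoment_eq_Gamma]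
  | succ n ih =>
    rw [show 2 * (n + 1) + 1 = 2 * n + 1 + 2 by ring, gaussHalfMoment_add_two, ih,
      Nat.factorial_succ]
    push_cast
    ring

lemma gaussHalfMoment_one_le : gaussHalfMoment 1 ≤ 1 := by
  rw [show 1 = 2 * 0 + 1 by rfl, gaussHalfMoment_odd, pow_zero, Nat.factorial_zero, Nat.cast_one,
    mul_one]
  exact div_le_one_of_le₀ (Real.one_le_sqrt.2 (by linarith [Real.pi_gt_three])) (Real.sqrt_nonneg _)

-- Integrate `(x - c) ^ 2 * x ^ n * gaussPDF x` over the half-line.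
lemma mul_gaussHalfMoment_succ_le {n : ℕ} {c : ℝ} (hc : c ^ 2 ≤ n + 1) :
    c * gaussHalfMoment (n + 1) ≤ gaussHalfMoment (n + 2) := by
  have hint (m : ℕ) (a : ℝ) : IntegrableOn (fun x ↦ a * (x ^ m * gaussPDF x)) (Ioi 0) :=
    ((integrable_pow_mul_gaussPDF m).const_mul a).integrableOn
  have hexpand : ∫ x in Ioi 0, (x - c) ^ 2 * (x ^ n * gaussPDF x) =
      gaussHalfMoment (n + 2) - 2 * c * gaussHalfMoment (n + 1) + c ^ 2 * gaussHalfMoment n := by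
    calc ∫ x in Ioi 0, (x - c) ^ 2 * (x ^ n * gaussPDF x)
        = ∫ x in Ioi 0, (1 * (x ^ (n + 2) * gaussPDF x) -
            2 * c * (x ^ (n + 1) * gaussPDF x) + c ^ 2 * (x ^ n * gaussPDF x)) := by
          congr with x
          ring
      _ = _ := by
          rw [integral_add, integral_sub (hint _ _) (hint _ _)]
          · simp only [integral_const_mul, one_mul, gaussHalfMoment]
          · exact (hint _ _).sub (hint _ _)
          · exact hint _ _
  have hnonneg : 0 ≤ ∫ x in Ioi 0, (x - c) ^ 2 * (x ^ n * gaussPDF x) :=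
    setIntegral_nonneg measurableSet_Ioi fun x hx ↦
      mul_nonneg (sq_nonneg _) (mul_nonneg (pow_nonneg (le_of_lt hx) n) (gaussPDF_pos x).le)
  have hM := gaussHalfMoment_add_two n
  have hcM := mul_le_mul_of_nonneg_right hc (gaussHalfMoment_nonneg n)
  linarith

-- Jensen's inequality for `exp (μ * ·)`: its tangent line at `c` lies below it.
lemma exp_mul_gaussHalfMoment_le {n : ℕ} {μ c : ℝ} (hμ : 0 ≤ μ)
    (hc : c * gaussHalfMoment n ≤ gaussHalfMoment (n + 1)) :
    Real.exp (-μ ^ 2 / 2) * (Real.exp (μ * c) * gaussHalfMoment n) ≤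
      ∫ x in Ioi 0, x ^ n * gaussPDF (x - μ) := by
  have hint (m : ℕ) (a : ℝ) : IntegrableOn (fun x ↦ a * (x ^ m * gaussPDF x)) (Ioi 0) :=
    ((integrable_pow_mul_gaussPDF m).const_mul a).integrableOn
  have htangent (x : ℝ) : Real.exp (μ * c) * (1 - μ * c + μ * x) ≤ Real.exp (μ * x) := by
    have h := mul_le_mul_of_nonneg_left (Real.add_one_le_exp (μ * x - μ * c))
      (Real.exp_pos (μ * c)).le
    rw [← Real.exp_add, add_sub_cancel] at h
    linarith
  calc Real.exp (-μ ^ 2 / 2) * (Real.exp (μ * c) * gaussHalfMoment n)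
      ≤ Real.exp (-μ ^ 2 / 2) * (Real.exp (μ * c) *
          ((1 - μ * c) * gaussHalfMoment n + μ * gaussHalfMoment (n + 1))) := by
        gcongr
        linarith [mul_le_mul_of_nonneg_left hc hμ]
    _ = ∫ x in Ioi 0, Real.exp (-μ ^ 2 / 2) * (Real.exp (μ * c) *
          ((1 - μ * c) * (x ^ n * gaussPDF x) + μ * (x ^ (n + 1) * gaussPDF x))) := by
        rw [integral_const_mul, integral_const_mul, integral_add (hint _ _) (hint _ _)]
        simp only [integral_const_mul, gaussHalfMoment]
    _ ≤ ∫ x in Ioi 0, x ^ n * gaussPDF (x - μ) := by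
        refine setIntegral_mono_on ((((hint _ _).add (hint _ _)).const_mul _).const_mul _)
          (integrable_pow_mul_gaussPDF_sub n μ).integrableOn measurableSet_Ioi fun x hx ↦ ?_
        have hw : 0 ≤ Real.exp (-μ ^ 2 / 2) * (x ^ n * gaussPDF x) :=
          mul_nonneg (Real.exp_pos _).le
            (mul_nonneg (pow_nonneg (le_of_lt hx) n) (gaussPDF_pos x).le)
        rw [gaussPDF_sub]
        linear_combination mul_le_mul_of_nonneg_left (htangent x) hw

lemma setIntegral_Iic_odd_pow_mul_gaussPDF {n : ℕ} (hn : Odd n) :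
    ∫ x in Iic 0, x ^ n * gaussPDF x = -gaussHalfMoment n := by
  have h := integral_comp_neg_Ioi (0 : ℝ) fun x ↦ x ^ n * gaussPDF x
  rw [neg_zero] at h
  rw [← h, gaussHalfMoment, ← integral_neg]
  simp only [hn.neg_pow, neg_mul, gaussPDF, neg_sq]

end Gaussian

/-- `f` is an `ε`-corruption of the density of `N(μ, 1)`: it is measurable and lies between
`1 - ε` times that density and the density itself. It is not normalized. -/
structure IsCorruptedGaussian (ε μ : ℝ) (f : ℝ → ℝ) : Prop where
  measurable : Measurable f
  mul_le : ∀ x, (1 - ε) * gaussPDF (x - μ) ≤ f x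
  le : ∀ x, f x ≤ gaussPDF (x - μ)

namespace IsCorruptedGaussian

open Set

variable {ε μ : ℝ} {f : ℝ → ℝ}

lemma comp_add_right (h : IsCorruptedGaussian ε μ f) (τ : ℝ) :
    IsCorruptedGaussian ε (μ - τ) fun x ↦ f (x + τ) where
  measurable := h.measurable.comp (measurable_add_const τ)
  mul_le x := by simpa only [sub_sub_eq_add_sub] using h.mul_le (x + τ)
  le x := by simpa only [sub_sub_eq_add_sub] using h.le (x + τ)

open Polynomial in
lemma integrable_eval_mul (h : IsCorruptedGaussian ε μ f) (P : ℝ[X]) :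
    Integrable fun x ↦ P.eval x * f x := by
  refine ((integrable_eval_mul_gaussPDF_sub P μ).norm.const_mul (|1 - ε| + 1)).mono'
    (P.continuous.measurable.mul h.measurable).aestronglyMeasurable (.of_forall fun x ↦ ?_)
  have hφ := gaussPDF_pos (x - μ)
  have habs : |f x| ≤ (|1 - ε| + 1) * gaussPDF (x - μ) := by
    refine abs_le.2 ⟨?_, ?_⟩ <;>
    nlinarith [h.mul_le x, h.le x, mul_nonneg (abs_nonneg (1 - ε)) hφ.le,
      mul_le_mul_of_nonneg_right (neg_abs_le (1 - ε)) hφ.le]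
  simp only [norm_mul, Real.norm_eq_abs, abs_of_pos hφ]
  rw [mul_left_comm]
  gcongr

lemma integrable_pow_mul (h : IsCorruptedGaussian ε μ f) (n : ℕ) :
    Integrable fun x ↦ x ^ n * f x := by
  simpa using h.integrable_eval_mul (.X ^ n)

lemma integrable (h : IsCorruptedGaussian ε μ f) : Integrable f := by
  simpa using h.integrable_pow_mul 0

lemma integrable_hermiteNorm_mul (h : IsCorruptedGaussian ε μ f) (t : ℕ) :
    Integrable fun x ↦ hermiteNorm t x * f x := by
  have hint := (h.integrable_eval_mul
    ((Polynomial.hermite t).map (Int.castRingHom ℝ))).div_const √(t.factorial : ℝ)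
  simpa [hermiteNorm, Polynomial.aeval_def, Polynomial.eval_map, mul_div_right_comm] using hint

lemma integral_le_one (h : IsCorruptedGaussian ε μ f) : ∫ x, f x ≤ 1 := by
  rw [← integral_gaussPDF_sub μ]
  exact integral_mono h.integrable (integrable_gaussPDF_sub μ) h.le

lemma one_sub_le_integral (h : IsCorruptedGaussian ε μ f) : 1 - ε ≤ ∫ x, f x := by
  have hmono := integral_mono ((integrable_gaussPDF_sub μ).const_mul (1 - ε)) h.integrable h.mul_le
  rwa [integral_const_mul, integral_gaussPDF_sub, mul_one] at hmono

lemma le_integral_odd_pow_mul (h : IsCorruptedGaussian ε μ f) (hμ : 0 ≤ μ) {n : ℕ}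
    (hn : Odd n) :
    (1 - ε) * (∫ x in Ioi 0, x ^ n * gaussPDF (x - μ)) -
        Real.exp (-μ ^ 2 / 2) * gaussHalfMoment n ≤ ∫ x, x ^ n * f x := by
  have hint := h.integrable_pow_mul n
  have hpos : (1 - ε) * (∫ x in Ioi 0, x ^ n * gaussPDF (x - μ)) ≤ ∫ x in Ioi 0, x ^ n * f x := by
    rw [← integral_const_mul]
    refine setIntegral_mono_on ((integrable_pow_mul_gaussPDF_sub n μ).const_mul _).integrableOn
      hint.integrableOn measurableSet_Ioi fun x hx ↦ ?_
    rw [mul_left_comm]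
    exact mul_le_mul_of_nonneg_left (h.mul_le x) (pow_nonneg (le_of_lt hx) n)
  have hneg : -(Real.exp (-μ ^ 2 / 2) * gaussHalfMoment n) ≤ ∫ x in Iic 0, x ^ n * f x := by
    rw [← mul_neg, ← setIntegral_Iic_odd_pow_mul_gaussPDF hn, ← integral_const_mul]
    refine setIntegral_mono_on ((integrable_pow_mul_gaussPDF n).const_mul _).integrableOn
      hint.integrableOn measurableSet_Iic fun x hx ↦ ?_
    have hfx : f x ≤ Real.exp (-μ ^ 2 / 2) * gaussPDF x := by
      refine (h.le x).trans ?_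
      rw [gaussPDF_sub]
      gcongr
      exact mul_le_of_le_one_left (gaussPDF_pos x).le
        (Real.exp_le_one_iff.2 (mul_nonpos_of_nonneg_of_nonpos hμ hx))
    rw [mul_left_comm]
    exact mul_le_mul_of_nonpos_left hfx (hn.pow_nonpos hx)
  have hsplit := intervalIntegral.integral_Iic_add_Ioi (b := 0) hint.integrableOn hint.integrableOn
  linarith

lemma exp_mul_gaussHalfMoment_le_integral_odd_pow_mul (h : IsCorruptedGaussian ε μ f)
    (hε : ε ≤ 1) (hμ : 0 ≤ μ) {n : ℕ} {c : ℝ} (hc : c ^ 2 ≤ 2 * n + 1) :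
    Real.exp (-μ ^ 2 / 2) * (((1 - ε) * Real.exp (μ * c) - 1) * gaussHalfMoment (2 * n + 1)) ≤
      ∫ x, x ^ (2 * n + 1) * f x := by
  have hlow := h.le_integral_odd_pow_mul hμ (odd_two_mul_add_one n)
  have hjensen := exp_mul_gaussHalfMoment_le hμ
    (mul_gaussHalfMoment_succ_le (n := 2 * n) (by exact_mod_cast hc))
  linarith [mul_le_mul_of_nonneg_left hjensen (sub_nonneg.2 hε)]

lemma le_integral_mul (h : IsCorruptedGaussian ε μ f) (hε : ε ≤ 1) (hμ : 0 ≤ μ) :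
    (1 - ε) * μ - Real.exp (-μ ^ 2 / 2) * gaussHalfMoment 1 ≤ ∫ x, x * f x := by
  have hlow := h.le_integral_odd_pow_mul hμ odd_one
  simp only [pow_one] at hlow
  linarith [mul_le_mul_of_nonneg_left (le_setIntegral_Ioi_mul_gaussPDF_sub μ) (sub_nonneg.2 hε)]

end IsCorruptedGaussian

section Numerics

open scoped Nat

lemma exp_le_216_div_100 : Real.exp 0.77 ≤ 2.16 := by
  refine (Real.exp_bound' (by norm_num) (by norm_num) (n := 7) (by norm_num)).trans ?_
  norm_num [Finset.sum_range_succ, Nat.factorial]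

lemma sqrt_two_pi_lt : √(2 * Real.pi) < 2.51 := by
  rw [Real.sqrt_lt' (by norm_num)]
  linarith [Real.pi_lt_d2]

lemma pow_mul_doubleFactorial_lt {n : ℕ} (hn : 1 ≤ n) :
    2.16 ^ (n + 1) * (2 * n + 1)‼ * 2.51 < 1.5 * n ! * (2 * n + 3 : ℝ) ^ (n + 1) := by
  induction n, hn using Nat.le_induction with
  | base => norm_num [Nat.doubleFactorial]
  | succ n hn ih =>
    have hn' : (1 : ℝ) ≤ n := by exact_mod_cast hn
    rw [cast_doubleFactorial_odd_succ, Nat.factorial_succ]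
    push_cast
    calc (2.16 : ℝ) ^ (n + 1 + 1) * ((2 * n + 3) * (2 * n + 1)‼) * 2.51
        = 2.16 * (2 * n + 3) * (2.16 ^ (n + 1) * (2 * n + 1)‼ * 2.51) := by ring
      _ < 2.16 * (2 * n + 3) * (1.5 * n ! * (2 * n + 3) ^ (n + 1)) := by gcongr
      _ ≤ (n + 1) * (2 * n + 5) * (1.5 * n ! * (2 * n + 5) ^ (n + 1)) := by
        gcongr ?_ * (_ * ?_ ^ _)
        · nlinarith
        · linarith
      _ = 1.5 * ((n + 1) * n !) * (2 * (n + 1) + 3) ^ (n + 1 + 1) := by ring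

lemma twenty_le_pow {n : ℕ} (hn : 1 ≤ n) : 20 ≤ (2 * n + 3 : ℝ) ^ (n + 1) := by
  have hn' : (1 : ℝ) ≤ n := by exact_mod_cast hn
  calc (20 : ℝ) ≤ 5 ^ (1 + 1) := by norm_num
    _ ≤ 5 ^ (n + 1) := by gcongr; norm_num
    _ ≤ (2 * n + 3) ^ (n + 1) := by gcongr; linarith

lemma doubleFactorial_mul_lt_gaussHalfMoment {n : ℕ} (hn : 1 ≤ n) :
    (2 * n + 1)‼ * 2 ^ n / (2 * n + 3 : ℝ) ^ (n + 1) <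
      1.5 * Real.exp (-0.77 * (n + 1)) * gaussHalfMoment (2 * n + 1) := by
  have hexp : (2.16 ^ (n + 1))⁻¹ ≤ Real.exp (-0.77 * (n + 1)) := by
    rw [neg_mul, Real.exp_neg, mul_comm, ← Nat.cast_succ, Real.exp_nat_mul]
    gcongr
    exact exp_le_216_div_100
  calc (2 * n + 1)‼ * 2 ^ n / (2 * n + 3 : ℝ) ^ (n + 1)
      < 1.5 * (2.16 ^ (n + 1))⁻¹ * (2 ^ n * n ! / 2.51) := by
        rw [div_lt_iff₀ (by positivity)]
        have := mul_lt_mul_of_pos_left (pow_mul_doubleFactorial_lt hn)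
          (by positivity : (0 : ℝ) < 2 ^ n * (2.16 ^ (n + 1))⁻¹ / 2.51)
        field_simp at this ⊢
        linarith
    _ ≤ 1.5 * Real.exp (-0.77 * (n + 1)) * gaussHalfMoment (2 * n + 1) := by
        rw [gaussHalfMoment_odd]
        gcongr
        exact sqrt_two_pi_lt.le

end Numerics

section Regimes

open scoped Nat

variable {ε δ R : ℝ}

lemma mul_exp_half_le_of_exp_eq (hε0 : 0 < ε) (hε1 : ε < 1)
    (hR : Real.exp (δ * R) = (1 + ε) / (1 - ε)) :
    1.5 * ε * Real.exp (δ * R / 2) ≤ (1 - ε) * Real.exp (δ * (1.5 * R)) - 1 := by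
  have h1ε : 0 < 1 - ε := sub_pos.2 hε1
  set y := Real.exp (δ * R / 2) with hy
  have hsq : y ^ 2 = (1 + ε) / (1 - ε) := by
    rw [hy, ← Real.exp_nat_mul, ← hR]
    congr 1
    push_cast
    ring
  have hcube : (1 - ε) * Real.exp (δ * (1.5 * R)) = (1 + ε) * y := by
    rw [show δ * (1.5 * R) = δ * R + δ * R / 2 by ring, Real.exp_add, hR]
    field_simp
    rw [hy]
  have hy1 : 1 + ε ≤ y := by
    refine le_of_sq_le_sq ?_ (Real.exp_pos _).le
    rw [hsq, le_div_iff₀ h1ε]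
    nlinarith [pow_pos hε0 2, pow_pos hε0 3]
  rw [hcube]
  nlinarith

lemma exp_le_exp_mul_exp_half {n : ℕ} (hδ : 0 ≤ δ) (hR : 0 ≤ R) (hδR : δ ≤ 2.1 * R)
    (hn : 3 * R ^ 2 ≤ 2 * n + 2) :
    Real.exp (-0.77 * (n + 1)) ≤ Real.exp (-δ ^ 2 / 2) * Real.exp (δ * R / 2) := by
  rw [← Real.exp_add]
  gcongr
  nlinarith [mul_nonneg hδ (sub_nonneg.2 hδR)]

namespace IsCorruptedGaussian

variable {f : ℝ → ℝ}

lemma lt_integral_odd_pow_mul (h : IsCorruptedGaussian ε δ f) (hε0 : 0 < ε) (hε1 : ε < 1)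
    (hδ : 0 ≤ δ) (hR : Real.exp (δ * R) = (1 + ε) / (1 - ε)) (hR0 : 0 ≤ R) (hδR : δ ≤ 2.1 * R)
    {n : ℕ} (hn : 1 ≤ n) (hRn : 3 * R ^ 2 ≤ 2 * n + 2) :
    (2 * n + 1)‼ * 2 ^ n * (ε / (2 * n + 3 : ℝ) ^ (n + 1)) < ∫ x, x ^ (2 * n + 1) * f x := by
  have hn' : (1 : ℝ) ≤ n := by exact_mod_cast hn
  calc (2 * n + 1)‼ * 2 ^ n * (ε / (2 * n + 3 : ℝ) ^ (n + 1))
      = ε * ((2 * n + 1)‼ * 2 ^ n / (2 * n + 3 : ℝ) ^ (n + 1)) := by ring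
    _ < ε * (1.5 * Real.exp (-0.77 * (n + 1)) * gaussHalfMoment (2 * n + 1)) := by
        gcongr
        exact doubleFactorial_mul_lt_gaussHalfMoment hn
    _ ≤ ε * (1.5 * (Real.exp (-δ ^ 2 / 2) * Real.exp (δ * R / 2)) *
          gaussHalfMoment (2 * n + 1)) := by
        have := gaussHalfMoment_nonneg (2 * n + 1)
        gcongr
        exact exp_le_exp_mul_exp_half hδ hR0 hδR hRn
    _ = Real.exp (-δ ^ 2 / 2) *
          (1.5 * ε * Real.exp (δ * R / 2) * gaussHalfMoment (2 * n + 1)) := by ring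
    _ ≤ Real.exp (-δ ^ 2 / 2) *
          (((1 - ε) * Real.exp (δ * (1.5 * R)) - 1) * gaussHalfMoment (2 * n + 1)) := by
        have := gaussHalfMoment_nonneg (2 * n + 1)
        gcongr
        exact mul_exp_half_le_of_exp_eq hε0 hε1 hR
    _ ≤ ∫ x, x ^ (2 * n + 1) * f x :=
        h.exp_mul_gaussHalfMoment_le_integral_odd_pow_mul hε1.le hδ (by nlinarith)

lemma exists_lt_abs_hermite_moment (h : IsCorruptedGaussian ε δ f) (hε0 : 0 < ε) (hε1 : ε < 1)
    (hδ : 0 ≤ δ) (hR : Real.exp (δ * R) = (1 + ε) / (1 - ε)) (hR0 : 0 ≤ R) (hδR : δ ≤ 2.1 * R)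
    {n : ℕ} (hn : 1 ≤ n) (hRn : 3 * R ^ 2 ≤ 2 * n + 2) :
    ∃ r ≤ n, ε / (2 * n + 3 : ℝ) ^ (n + 1) < |∫ x, hermiteNorm (2 * r + 1) x * f x| := by
  by_contra! hsmall
  exact ((le_abs_self _).trans <| abs_integral_odd_pow_mul_le
    (fun r _ ↦ h.integrable_hermiteNorm_mul _) hsmall).not_gt
    (h.lt_integral_odd_pow_mul hε0 hε1 hδ hR hR0 hδR hn hRn)

lemma integral_comp_add_right_mul (h : IsCorruptedGaussian ε δ f) (τ : ℝ) :
    ∫ x, x * f (x + τ) = (∫ x, x * f x) - τ * ∫ x, f x := by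
  have hint : Integrable fun x ↦ x * f x := by simpa using h.integrable_pow_mul 1
  rw [← integral_const_mul, ← integral_sub hint (h.integrable.const_mul τ),
    ← integral_add_right_eq_self (fun x ↦ x * f x - τ * f x) τ]
  congr with x
  ring

lemma lt_integral_mul (h : IsCorruptedGaussian ε δ f) (hε0 : 0 < ε) (hε1 : ε < 1)
    (hR : Real.exp (δ * R) = (1 + ε) / (1 - ε)) (hR1 : 1 < R) (hδR : 2.1 * R < δ) :
    1 / 20 * ∫ x, f x < ∫ x, x * f x := by
  have hexp : Real.exp (-(δ - 1 / 20) ^ 2 / 2) ≤ 1 - ε :=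
    calc Real.exp (-(δ - 1 / 20) ^ 2 / 2) ≤ Real.exp (-(δ * R)) := by
          gcongr
          nlinarith
      _ = (1 - ε) / (1 + ε) := by rw [Real.exp_neg, hR, inv_div]
      _ ≤ 1 - ε := div_le_self (by linarith) (by linarith)
  have hpos : 0 < ∫ x, x * f (x + 1 / 20) :=
    calc 0 < (1 - ε) * (δ - 1 / 20) - (1 - ε) * 1 := by nlinarith
      _ ≤ (1 - ε) * (δ - 1 / 20) - Real.exp (-(δ - 1 / 20) ^ 2 / 2) * gaussHalfMoment 1 := by
          have := gaussHalfMoment_nonneg 1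
          gcongr
          exact gaussHalfMoment_one_le
      _ ≤ ∫ x, x * f (x + 1 / 20) :=
          (h.comp_add_right (1 / 20)).le_integral_mul hε1.le (by linarith)
  rw [h.integral_comp_add_right_mul] at hpos
  exact sub_pos.1 hpos

lemma exists_hermite_moment_gt (h : IsCorruptedGaussian ε δ f) (hε0 : 0 < ε) (hε1 : ε < 1)
    (hδ : 0 ≤ δ) (hR : Real.exp (δ * R) = (1 + ε) / (1 - ε)) (hR1 : 1 < R)
    {n : ℕ} (hn : 1 ≤ n) (hRn : 3 * R ^ 2 ≤ 2 * n + 2) :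
    ∃ r ≤ n, |(∫ x, hermiteNorm (2 * r + 1) x * f x) / ∫ x, f x| >
      ε / (2 * n + 3 : ℝ) ^ (n + 1) := by
  have hmass : 0 < ∫ x, f x := (sub_pos.2 hε1).trans_le h.one_sub_le_integral
  simp only [gt_iff_lt, abs_div, abs_of_pos hmass, lt_div_iff₀ hmass]
  rcases le_or_gt δ (2.1 * R) with hδR | hδR
  · obtain ⟨r, hr, hlt⟩ := h.exists_lt_abs_hermite_moment hε0 hε1 hδ hR (by linarith) hδR hn hRn
    exact ⟨r, hr, (mul_le_of_le_one_right (by positivity) h.integral_le_one).trans_lt hlt⟩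
  · refine ⟨0, n.zero_le, ?_⟩
    simp only [mul_zero, zero_add, hermiteNorm_one]
    refine lt_of_le_of_lt ?_ ((h.lt_integral_mul hε0 hε1 hR hR1 hδR).trans_le (le_abs_self _))
    gcongr
    exact twenty_le_pow hn

end IsCorruptedGaussian

end Regimes

lemma exp_mul_one_div_mul_log {ε δ : ℝ} (hε : ε ∈ Set.Ioo (0 : ℝ) 1) (hδ : δ ≠ 0) :
    Real.exp (δ * (1 / δ * Real.log (1 + 2 * ε / (1 - ε)))) = (1 + ε) / (1 - ε) := by
  obtain ⟨hε0, hε1⟩ := hε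
  have : 0 < 1 - ε := sub_pos.2 hε1
  rw [← mul_assoc, mul_one_div_cancel hδ, one_mul, Real.exp_log (by positivity)]
  field_simp
  ring

lemma add_one_rpow_half (n : ℕ) :
    (((2 * n + 2 : ℕ) : ℝ) + 1) ^ (((2 * n + 2 : ℕ) : ℝ) / 2) = (2 * n + 3) ^ (n + 1) := by
  rw [show ((2 * n + 2 : ℕ) : ℝ) / 2 = (n + 1 : ℕ) by push_cast; ring, Real.rpow_natCast]
  push_cast
  ring

/-- For `ε ∈ (0,1)`, `δ ∈ (0, log(1 + 2ε/(1−ε)))`, and an even positive integer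
`k ≥ 3·((1/δ)·log(1 + 2ε/(1−ε)))²`: for any `ε`-corruption `f` of the density of
`N(δ,1)`, the visible-sample distribution `P'` has some normalized Hermite moment of
order `t ∈ [1,k]` with `|E_{x∼P'}[h_t(x)]| > ε/(k+1)^{k/2}`. -/
theorem stmt6 (ε δ : ℝ) (k : ℕ)
    (hε : ε ∈ Set.Ioo (0 : ℝ) 1)
    (hδ : δ ∈ Set.Ioo 0 (Real.log (1 + 2 * ε / (1 - ε))))
    (hkeven : Even k) (hkpos : 0 < k)
    (hk : 3 * ((1 / δ) * Real.log (1 + 2 * ε / (1 - ε))) ^ 2 ≤ (k : ℝ))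
    (f : ℝ → ℝ) (hf : Measurable f)
    (hsand : ∀ x : ℝ, (1 - ε) * gaussPDF (x - δ) ≤ f x ∧ f x ≤ gaussPDF (x - δ)) :
    ∃ t : ℕ, 1 ≤ t ∧ t ≤ k ∧
      |(∫ x : ℝ, hermiteNorm t x * f x) / (∫ x : ℝ, f x)| >
        ε / (((k : ℝ) + 1) ^ ((k : ℝ) / 2)) := by
  set R := 1 / δ * Real.log (1 + 2 * ε / (1 - ε)) with hR
  have hR1 : 1 < R := by
    rw [hR, one_div_mul_eq_div, one_lt_div hδ.1]
    exact hδ.2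
  have hk3 : 3 < k := by
    have : (3 : ℝ) < k := by nlinarith
    exact_mod_cast this
  obtain ⟨n, rfl, hn⟩ : ∃ n, k = 2 * n + 2 ∧ 1 ≤ n := by
    obtain ⟨m, hm⟩ := hkeven
    exact ⟨m - 1, by omega, by omega⟩
  have h : IsCorruptedGaussian ε δ f := ⟨hf, fun x ↦ (hsand x).1, fun x ↦ (hsand x).2⟩
  obtain ⟨r, hr, hmoment⟩ := h.exists_hermite_moment_gt hε.1 hε.2 hδ.1.le
    (exp_mul_one_div_mul_log hε hδ.1.ne') hR1 hn (by exact_mod_cast hk)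
  exact ⟨2 * r + 1, by omega, by omega, by rwa [add_one_rpow_half]⟩
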